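/- Let A be an integrally closed residuated lattice and define the relation a ≼ b :⟺ a\b = e on A. Then ≼ is a partial order on A (reflexive, antisymmetric, and transitive); in particular, if a\b = e and b\c = e then a\c = e. -/

import Mathlib

/-- A residuated lattice: a lattice-ordered monoid with left and right residuals,
i.e. `b ≤ a\c ↔ a*b ≤ c ↔ a ≤ c/b`.  `ldiv a c` denotes `a\c` and `rdiv c b` denotes `c/b`. -/
class ResiduatedLattice (α : Type*) extends Lattice α, Monoid α where
  ldiv : α → α → α
  rdiv : α → α → α
  le_ldiv_iff : ∀ a b c : α, b ≤ ldiv a c ↔ a * b ≤ c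
  le_rdiv_iff : ∀ a b c : α, a ≤ rdiv c b ↔ a * b ≤ c

open ResiduatedLattice

/-! Right integral closure says that `x * y ≤ y` forces `x ≤ 1`; consequently `x * y ≤ 1` is
symmetric in `x` and `y`. If `a ≼ b`, this symmetry turns `a * n ≤ 1` into `b * n ≤ 1`. So, given
`a ≼ b ≼ c`, from `a * n ≤ c` one gets `a * (n * (c \ 1)) ≤ 1`, hence `c * (n * (c \ 1)) ≤ 1`, that
is `n * (c \ 1) ≤ c \ 1`, and so `n ≤ 1`. -/

/-- A residuated partially ordered monoid: a residuated lattice without the lattice operations, with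
`ldiv a c` for `a \ c` and `rdiv c b` for `c / b`. -/
class ResiduatedPomonoid (α : Type*) extends PartialOrder α, Monoid α where
  ldiv : α → α → α
  rdiv : α → α → α
  le_ldiv_iff {a b c : α} : b ≤ ldiv a c ↔ a * b ≤ c
  le_rdiv_iff {a b c : α} : a ≤ rdiv c b ↔ a * b ≤ c

/-- The residuated pomonoid underlying a residuated lattice; not an instance, so that `Monoid α`
keeps being found through `ResiduatedLattice α` alone. -/
abbrev ResiduatedLattice.toResiduatedPomonoid (α : Type*) [ResiduatedLattice α] :
    ResiduatedPomonoid α where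
  ldiv := ldiv
  rdiv := rdiv
  le_ldiv_iff := le_ldiv_iff _ _ _
  le_rdiv_iff := le_rdiv_iff _ _ _

namespace ResiduatedPomonoid

variable {α : Type*} [ResiduatedPomonoid α] {a b c n x y : α}

instance : MulLeftMono α :=
  ⟨fun _ _ _ h => le_ldiv_iff.1 (h.trans (le_ldiv_iff.2 le_rfl))⟩

instance : MulRightMono α :=
  ⟨fun _ _ _ h => le_rdiv_iff.1 (h.trans (le_rdiv_iff.2 le_rfl))⟩

theorem mul_ldiv_le (a b : α) : a * ldiv a b ≤ b :=
  le_ldiv_iff.1 le_rfl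

/-- The relation `a ≼ b`, that is `a \ b = 1`. -/
def Preceq (a b : α) : Prop :=
  ldiv a b = 1

theorem preceq_iff : Preceq a b ↔ a ≤ b ∧ ∀ n, a * n ≤ b → n ≤ 1 := by
  have one_le : 1 ≤ ldiv a b ↔ a ≤ b := by rw [le_ldiv_iff, mul_one]
  refine ⟨fun h => ⟨one_le.1 h.ge, fun n hn => ?_⟩, fun ⟨hab, h⟩ => ?_⟩
  · exact (le_ldiv_iff.2 hn).trans h.le
  · exact le_antisymm (h _ (mul_ldiv_le a b)) (one_le.2 hab)

theorem Preceq.le (h : Preceq a b) : a ≤ b :=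
  (preceq_iff.1 h).1

theorem Preceq.le_one_of_mul_le (h : Preceq a b) (hn : a * n ≤ b) : n ≤ 1 :=
  (preceq_iff.1 h).2 n hn

theorem Preceq.antisymm (hab : Preceq a b) (hba : Preceq b a) : a = b :=
  le_antisymm hab.le hba.le

section RightIntegrallyClosed

variable (hr : ∀ a : α, rdiv a a = 1)
include hr

theorem le_one_of_mul_le_self (h : x * y ≤ y) : x ≤ 1 :=
  (le_rdiv_iff.2 h).trans (hr y).le

theorem mul_le_one_symm (h : x * y ≤ 1) : y * x ≤ 1 := by
  refine le_one_of_mul_le_self hr (y := y) ?_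
  calc y * x * y = y * (x * y) := mul_assoc y x y
    _ ≤ y * 1 := by gcongr
    _ = y := mul_one y

theorem Preceq.mul_le_one (h : Preceq a b) (hn : a * n ≤ 1) : b * n ≤ 1 := by
  refine mul_le_one_symm hr (h.le_one_of_mul_le ?_)
  calc a * (n * b) = a * n * b := (mul_assoc a n b).symm
    _ ≤ 1 * b := by gcongr
    _ = b := one_mul b

theorem Preceq.refl (a : α) : Preceq a a := by
  refine preceq_iff.2 ⟨le_rfl, fun n hn => ?_⟩
  refine le_one_of_mul_le_self hr (y := ldiv a a) (le_ldiv_iff.2 ?_)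
  calc a * (n * ldiv a a) = a * n * ldiv a a := (mul_assoc _ _ _).symm
    _ ≤ a * ldiv a a := by gcongr
    _ ≤ a := mul_ldiv_le a a

theorem Preceq.trans (hab : Preceq a b) (hbc : Preceq b c) : Preceq a c := by
  refine preceq_iff.2 ⟨hab.le.trans hbc.le, fun n hn => ?_⟩
  have ha : a * (n * ldiv c 1) ≤ 1 := calc
    a * (n * ldiv c 1) = a * n * ldiv c 1 := (mul_assoc _ _ _).symm
    _ ≤ c * ldiv c 1 := by gcongr
    _ ≤ 1 := mul_ldiv_le c 1
  have hc : c * (n * ldiv c 1) ≤ 1 := hbc.mul_le_one hr (hab.mul_le_one hr ha)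
  exact le_one_of_mul_le_self hr (le_ldiv_iff.2 hc)

end RightIntegrallyClosed

end ResiduatedPomonoid

open ResiduatedPomonoid (Preceq) in
theorem preceq_partial_order_general {α : Type*} [ResiduatedPomonoid α]
    (hr : ∀ a : α, ResiduatedPomonoid.rdiv a a = 1) :
    (∀ a : α, Preceq a a) ∧
    (∀ a b : α, Preceq a b → Preceq b a → a = b) ∧
    (∀ a b c : α, Preceq a b → Preceq b c → Preceq a c) :=
  ⟨Preceq.refl hr, fun _ _ => Preceq.antisymm, fun _ _ _ => Preceq.trans hr⟩

/-- In an integrally closed residuated lattice, the relation `a ≼ b :⟺ a\b = e`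
is a partial order: reflexive, antisymmetric, and transitive. -/
theorem preceq_partial_order {α : Type*} [ResiduatedLattice α]
    (hic : ∀ a : α, ldiv a a = 1 ∧ rdiv a a = 1) :
    (∀ a : α, ldiv a a = 1) ∧
    (∀ a b : α, ldiv a b = 1 → ldiv b a = 1 → a = b) ∧
    (∀ a b c : α, ldiv a b = 1 → ldiv b c = 1 → ldiv a c = 1) :=
  letI := ResiduatedLattice.toResiduatedPomonoid α
  preceq_partial_order_general fun a => (hic a).2
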